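/- arXiv:2402.19089 — 4 statements merged into one kernel-verified Lean document; each statement's English description precedes it below -/
import Mathlib

section
/- Let 𝒜 be a standardized completely reachable binary circular DFA on ℤ_n (n even) whose orbit subgroup K equals the subgroup 2ℤ_n of even residues. Then K, viewed as a subset of ℤ_n, is (n+1)-expandable. -/
/-!
Write `f = δa` and `p = f 0`, and expand backwards, taking preimages of `K` letter by letter.
A set `S` with `0 ∉ S` satisfies `f '' (f ⁻¹' S) = S`, because complete reachability forces
`range f = {0}ᶜ`; the preimage is strictly larger than `S` when `p ∈ S`, since `p` is the value
with several preimages. Pulling back is always possible and size-preserving for the rotation `b`.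

Pulling `K` back along `b` gives the odd residues `Kᶜ`, and then along `a` gives
`T = {q | f q ∉ K}`. If `T` contained no even residue, then by counting `T = Kᶜ`, so both letters
would permute the partition `{K, Kᶜ}` and no singleton could be reachable. So `T ∩ K` is a nonempty
subset of `K`, and it misses `0`; hence its stabilizer `H` under translations lies in `K` and does
not contain the whole orbit. Let `i ≥ 1` be minimal with `f^i 0 ∉ H`. There is `x ∈ K \ T` with
`x + f^i 0 ∈ T`, and `x` may be replaced by any `k` in the coset `x + H`. By minimality of `i`,
`k + f^j 0 ∉ T` for `j < i`, so `{q | q + k ∈ T}` can be pulled back `i` times along `a`, the last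
time with a gain. The word `a^i b^k a b` therefore expands `K`.

For its length, let `d` be the least positive integer whose class lies in `H`, and take `k < d`.
The residues `k` and `d` are even, so `k ≤ d - 2`. The residues `r + f^j 0` with `r < d`, `j < i` are
pairwise distinct, so `d * i ≤ n` and thus `d + i ≤ n + 1`; altogether `2 + k + i ≤ n + 1`.
-/


/-- The two-letter alphabet of a binary DFA. -/
inductive Letter where
  | a : Letter
  | b : Letter

/-- Left-to-right action of a word on `ZMod n`, where the letter `b` acts as `q ↦ q + 1`
(a cyclic permutation) and the letter `a` acts as the given map `δa`. -/
def act {n : ℕ} (δa : ZMod n → ZMod n) : List Letter → ZMod n → ZMod n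
  | [], q => q
  | Letter.a :: w, q => act δa w (δa q)
  | Letter.b :: w, q => act δa w (q + 1)

/-- A binary circular DFA is completely reachable if every nonempty subset of states
is the image of the full state set under the action of some word. -/
def CompletelyReachable {n : ℕ} (δa : ZMod n → ZMod n) : Prop :=
  ∀ S : Set (ZMod n), S.Nonempty → ∃ w : List Letter, act δa w '' Set.univ = S

/-- A binary circular DFA is standardized if `0` has no `δa`-preimage and `δa 0` is the
unique state with more than one `δa`-preimage. -/
def Standardized {n : ℕ} (δa : ZMod n → ZMod n) : Prop :=
  (∀ q : ZMod n, δa q ≠ 0) ∧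
  ∀ p : ZMod n, 1 < {q : ZMod n | δa q = p}.ncard ↔ p = δa 0

/-- The orbit `O(𝒜) = {δa^i(0) : i ≥ 1}`. -/
def orbitSet {n : ℕ} (δa : ZMod n → ZMod n) : Set (ZMod n) :=
  {q : ZMod n | ∃ i : ℕ, 1 ≤ i ∧ δa^[i] 0 = q}

/-- The orbit subgroup `K(𝒜)`: the subgroup of `(ZMod n, +)` generated by the orbit. -/
def orbitSubgroup {n : ℕ} (δa : ZMod n → ZMod n) : AddSubgroup (ZMod n) :=
  AddSubgroup.closure (orbitSet δa)

/-- A word `w` expands a subset `S` if some strictly larger subset `R` satisfies `δ(R,w) = S`. -/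
def Expands {n : ℕ} (δa : ZMod n → ZMod n) (w : List Letter) (S : Set (ZMod n)) : Prop :=
  ∃ R : Set (ZMod n), S.ncard < R.ncard ∧ act δa w '' R = S

/-- A subset `S` is `ℓ`-expandable if some word of length at most `ℓ` expands it. -/
def Expandable {n : ℕ} (δa : ZMod n → ZMod n) (ℓ : ℕ) (S : Set (ZMod n)) : Prop :=
  ∃ w : List Letter, w.length ≤ ℓ ∧ Expands δa w S

/-! ### Action of words -/

theorem act_append {n : ℕ} (f : ZMod n → ZMod n) (u v : List Letter) (q : ZMod n) :
    act f (u ++ v) q = act f v (act f u q) := by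
  induction u generalizing q with
  | nil => rfl
  | cons c u ih => cases c <;> simp [act, ih]

theorem act_replicate_a {n : ℕ} (f : ZMod n → ZMod n) (i : ℕ) (q : ZMod n) :
    act f (List.replicate i Letter.a) q = f^[i] q := by
  induction i generalizing q with
  | zero => rfl
  | succ i ih => simp [List.replicate_succ, act, ih]

theorem act_replicate_b {n : ℕ} (f : ZMod n → ZMod n) (k : ℕ) (q : ZMod n) :
    act f (List.replicate k Letter.b) q = q + k := by
  induction k generalizing q with
  | zero => simp [act]
  | succ k ih => simp only [List.replicate_succ, act, ih]; push_cast; ring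

theorem act_word {n : ℕ} (f : ZMod n → ZMod n) (i k : ℕ) (q : ZMod n) :
    act f (List.replicate i Letter.a ++ (List.replicate k Letter.b ++ [Letter.a, Letter.b])) q
      = f (f^[i] q + k) + 1 := by
  rw [act_append, act_append, act_replicate_a, act_replicate_b]
  rfl

/-! ### The range of `a` and preimages along `a` -/

theorem two_le {n : ℕ} [NeZero n] (hev : Even n) : 2 ≤ n := by
  have := NeZero.ne n
  obtain ⟨m, rfl⟩ := hev
  omega

/-- A word is a permutation unless it contains `a`, in which case its rank is at most that
of `a`. -/
theorem range_act {n : ℕ} [NeZero n] (f : ZMod n → ZMod n) (w : List Letter) :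
    Set.range (act f w) = Set.univ ∨ (Set.range (act f w)).ncard ≤ (Set.range f).ncard := by
  induction w with
  | nil => left; exact Set.range_id
  | cons c w ih =>
    cases c with
    | a =>
      right
      have : Set.range (act f (Letter.a :: w)) = act f w '' Set.range f := by
        rw [← Set.range_comp]; rfl
      rw [this]
      exact Set.ncard_image_le (Set.toFinite _)
    | b =>
      have : Set.range (act f (Letter.b :: w)) = Set.range (act f w) :=
        (Equiv.addRight (1 : ZMod n)).surjective.range_comp (act f w)
      rw [this]
      exact ih

theorem range_eq {n : ℕ} [NeZero n] (hn : 2 ≤ n) (f : ZMod n → ZMod n)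
    (hstd : Standardized f) (hcr : CompletelyReachable f) : Set.range f = {0}ᶜ := by
  have : Fact (1 < n) := ⟨hn⟩
  obtain ⟨w, hw⟩ := hcr {0}ᶜ ⟨1, by simp⟩
  rw [Set.image_univ] at hw
  refine Set.eq_of_subset_of_ncard_le ?_ ?_ (Set.toFinite _)
  · rintro _ ⟨q, rfl⟩
    exact hstd.1 q
  · rcases range_act f w with h | h
    · have : (0 : ZMod n) ∈ ({0}ᶜ : Set (ZMod n)) := by rw [← hw, h]; trivial
      simp at this
    · rwa [hw] at h

theorem image_preimage {n : ℕ} {f : ZMod n → ZMod n} (hr : Set.range f = {0}ᶜ)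
    {S : Set (ZMod n)} (h0 : (0 : ZMod n) ∉ S) : f '' (f ⁻¹' S) = S := by
  rw [Set.image_preimage_eq_iff, hr]
  rintro x hx rfl
  exact h0 hx

theorem image_preimage_iterate {n : ℕ} {f : ZMod n → ZMod n} (hr : Set.range f = {0}ᶜ) (i : ℕ)
    {S : Set (ZMod n)} (h0 : ∀ j < i, f^[j] 0 ∉ S) : f^[i] '' (f^[i] ⁻¹' S) = S := by
  induction i with
  | zero => simp
  | succ i ih =>
    have h1 := ih fun j hj => h0 j (by omega)
    have h2 : f '' (f ⁻¹' (f^[i] ⁻¹' S)) = f^[i] ⁻¹' S :=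
      image_preimage hr (h0 i (by omega))
    rw [Function.iterate_succ, Set.image_comp, Set.preimage_comp, h2, h1]

theorem ncard_lt_preimage {n : ℕ} [NeZero n] {f : ZMod n → ZMod n} (hstd : Standardized f)
    (hr : Set.range f = {0}ᶜ) {S : Set (ZMod n)} (h0 : (0 : ZMod n) ∉ S) (hp : f 0 ∈ S) :
    S.ncard < (f ⁻¹' S).ncard := by
  obtain ⟨u, hu, hu0⟩ := Set.exists_ne_of_one_lt_ncard ((hstd.2 (f 0)).2 rfl) 0
  -- `0` can be dropped from the preimage, because `u` has the same value as `0`.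
  have h : S ⊆ f '' (f ⁻¹' S \ {0}) := by
    intro y hy
    rw [← image_preimage hr h0] at hy
    obtain ⟨x, hx, rfl⟩ := hy
    by_cases hx0 : x = 0
    · subst hx0
      exact ⟨u, ⟨show f u ∈ S by rwa [show f u = f 0 from hu], by simpa using hu0⟩, hu⟩
    · exact ⟨x, ⟨hx, hx0⟩, rfl⟩
  calc S.ncard ≤ (f '' (f ⁻¹' S \ {0})).ncard := Set.ncard_le_ncard h (Set.toFinite _)
    _ ≤ (f ⁻¹' S \ {0}).ncard := Set.ncard_image_le (Set.toFinite _)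
    _ < (f ⁻¹' S).ncard := Set.ncard_sdiff_singleton_lt_of_mem hp (Set.toFinite _)

/-! ### Parity classes -/

theorem add_one_mem_iff {n : ℕ} [NeZero n] (hev : Even n) (x : ZMod n) :
    x + 1 ∈ AddSubgroup.zmultiples (2 : ZMod n) ↔ x ∉ AddSubgroup.zmultiples (2 : ZMod n) := by
  constructor
  · intro h1 h2
    have h := AddSubgroup.sub_mem _ h1 h2
    rw [add_sub_cancel_left, AddSubgroup.mem_zmultiples_iff] at h
    obtain ⟨m, hm⟩ := h
    have h3 : ((m * 2 - 1 : ℤ) : ZMod n) = 0 := by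
      push_cast
      rw [← hm, zsmul_eq_mul, sub_self]
    rw [ZMod.intCast_zmod_eq_zero_iff_dvd] at h3
    have h4 : (2 : ℤ) ∣ m * 2 - 1 := (Int.natCast_dvd_natCast.2 hev.two_dvd).trans h3
    omega
  · intro h
    rcases Nat.even_or_odd' x.val with ⟨m, hm | hm⟩
    · refine absurd ?_ h
      rw [AddSubgroup.mem_zmultiples_iff]
      refine ⟨m, ?_⟩
      rw [← ZMod.natCast_zmod_val x, hm]
      simp [mul_comm]
    · rw [AddSubgroup.mem_zmultiples_iff]
      refine ⟨m + 1, ?_⟩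
      rw [← ZMod.natCast_zmod_val x, hm]
      simp
      ring

/-- If both letters respect the partition of the states into `K` and its complement, then so does
every word. -/
theorem act_parity {n : ℕ} {f : ZMod n → ZMod n} {K : AddSubgroup (ZMod n)}
    (hK : ∀ x, x + 1 ∈ K ↔ x ∉ K) (hf : ∀ x, f x ∈ K ↔ x ∈ K) (w : List Letter) (x y : ZMod n) :
    (act f w x ∈ K ↔ act f w y ∈ K) ↔ (x ∈ K ↔ y ∈ K) := by
  induction w generalizing x y with
  | nil => rfl
  | cons c w ih =>
    cases c with
    | a => simp only [act, ih, hf]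
    | b => simp only [act, ih, hK, not_iff_not]

/-- Some element of `K` is mapped by `f` outside `K`. -/
theorem exists_leaving {n : ℕ} [NeZero n] {f : ZMod n → ZMod n} {K : AddSubgroup (ZMod n)}
    (hK : ∀ x, x + 1 ∈ K ↔ x ∉ K) (hcr : CompletelyReachable f) (hr : Set.range f = {0}ᶜ) :
    ∃ t ∈ K, f t ∉ K := by
  by_contra! hcon
  have hsurj := image_preimage hr (S := (K : Set (ZMod n))ᶜ) (by simp [K.zero_mem])
  have heq : f ⁻¹' (K : Set (ZMod n))ᶜ = (K : Set (ZMod n))ᶜ := by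
    refine Set.eq_of_subset_of_ncard_le (fun q hq hqK => hq (hcon q hqK)) ?_ (Set.toFinite _)
    conv_lhs => rw [← hsurj]
    exact Set.ncard_image_le (Set.toFinite _)
  have hf : ∀ x, f x ∈ K ↔ x ∈ K := fun x => not_iff_not.1 (Set.ext_iff.1 heq x)
  obtain ⟨w, hw⟩ := hcr {0} ⟨0, rfl⟩
  have h0 : act f w 0 = 0 := by
    have : act f w 0 ∈ ({0} : Set (ZMod n)) := hw ▸ Set.mem_image_of_mem _ trivial
    exact this
  have h1 : act f w 1 = 0 := by
    have : act f w 1 ∈ ({0} : Set (ZMod n)) := hw ▸ Set.mem_image_of_mem _ trivial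
    exact this
  have h := act_parity hK hf w 0 1
  have h2 := hK 0
  rw [zero_add] at h2
  simp [h0, h1, h2, K.zero_mem] at h

/-! ### Translation stabilizers and the choice of exponents -/

/-- The stabilizer of the set `A` under translations. -/
def transStab {n : ℕ} (A : Set (ZMod n)) : AddSubgroup (ZMod n) where
  carrier := {g | ∀ x, x + g ∈ A ↔ x ∈ A}
  zero_mem' := by simp
  add_mem' {g h} hg hh x := by rw [← add_assoc, hh, hg]
  neg_mem' {g} hg x := by rw [← hg (x + -g), neg_add_cancel_right]

theorem mem_transStab {n : ℕ} {A : Set (ZMod n)} {g : ZMod n} :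
    g ∈ transStab A ↔ ∀ x, x + g ∈ A ↔ x ∈ A := Iff.rfl

/-- A translation which does not stabilize `A` moves some point into `A`. -/
theorem exists_entering {n : ℕ} [NeZero n] {A : Set (ZMod n)} {g : ZMod n} (hg : g ∉ transStab A) :
    ∃ x, x ∉ A ∧ x + g ∈ A := by
  by_contra! hcon
  apply hg
  intro x
  refine ⟨fun h => by_contra fun hx => hcon x hx h, fun hx => by_contra fun h => ?_⟩
  -- Outside `A`, adding `g` never returns to `A`, although `x + n • g = x`.
  have h' : ∀ m : ℕ, x + g + m * g ∉ A := by
    intro m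
    induction m with
    | zero => simpa using h
    | succ m ih =>
      have := hcon _ ih
      push_cast
      rwa [show x + g + (m + 1) * g = x + g + m * g + g by ring]
  have h2 := h' (n - 1)
  rw [Nat.cast_sub (NeZero.pos n), ZMod.natCast_self] at h2
  apply h2
  convert hx using 1
  push_cast
  ring

/-- The counting bound: the first exit time `i` of the orbit of `0` from the subgroup `H`, and
the least positive `d` with class in `H`, satisfy `d * i ≤ n`. -/
theorem mul_le_of_first_exit {n : ℕ} [NeZero n] {f : ZMod n → ZMod n} {H : AddSubgroup (ZMod n)}
    {d i : ℕ} (hd : ∀ m < d, 0 < m → (m : ZMod n) ∉ H) (hi : f^[i] 0 ∉ H)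
    (hmin : ∀ j < i, f^[j] 0 ∈ H) : d * i ≤ n := by
  -- An equality `f^a 0 = f^b 0` with `a < b < i` would give `f^i 0 = f^(i - (b - a)) 0 ∈ H`.
  have hne : ∀ a b : ℕ, a < b → b < i → f^[a] 0 ≠ f^[b] 0 := by
    intro a b hab hbi h
    apply hi
    have h1 : f^[i] 0 = f^[i - b + a] 0 := by
      rw [Function.iterate_add_apply, h, ← Function.iterate_add_apply]
      congr 1
      omega
    rw [h1]
    exact hmin _ (by omega)
  have hrne : ∀ r s : ℕ, r < s → s < d → ∀ x ∈ H, ∀ y ∈ H, (r : ZMod n) + x ≠ s + y := by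
    intro r s hrs hsd x hx y hy h
    apply hd (s - r) (by omega) (by omega)
    rw [Nat.cast_sub hrs.le]
    rw [show (s : ZMod n) - r = x - y by linear_combination -h]
    exact H.sub_mem hx hy
  have hinj : Function.Injective
      (fun z : Fin d × Fin i => ((z.1 : ℕ) : ZMod n) + f^[(z.2 : ℕ)] 0) := by
    rintro ⟨⟨r, hr⟩, ⟨a, ha⟩⟩ ⟨⟨s, hs⟩, ⟨b, hb⟩⟩ h
    simp only at h
    have hrs : r = s := by
      rcases lt_trichotomy r s with h1 | h1 | h1
      · exact absurd h (hrne r s h1 hs _ (hmin a ha) _ (hmin b hb))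
      · exact h1
      · exact absurd h.symm (hrne s r h1 hr _ (hmin b hb) _ (hmin a ha))
    subst hrs
    have h := add_left_cancel h
    have hab : a = b := by
      rcases lt_trichotomy a b with h1 | h1 | h1
      · exact absurd h (hne a b h1 hb)
      · exact h1
      · exact absurd h.symm (hne b a h1 ha)
    subst hab
    rfl
  have := Fintype.card_le_of_injective _ hinj
  simpa using this

/-- The choice of the exponents of the word `a^(i+1) b^k a b`: its length is at most `n + 1`, and
the preimage of `Kᶜ` along `b^k a` misses `f^j 0` for `j ≤ i` and contains `f^(i+1) 0`. -/
theorem exists_exponents {n : ℕ} [NeZero n] {f : ZMod n → ZMod n} {K : AddSubgroup (ZMod n)}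
    (hK : ∀ x, x + 1 ∈ K ↔ x ∉ K) (horb : orbitSubgroup f = K) (ht : ∃ t ∈ K, f t ∉ K) :
    ∃ i k : ℕ, i + 1 + k + 2 ≤ n + 1 ∧ (∀ j ≤ i, f (f^[j] 0 + k) ∈ K) ∧
      f (f^[i + 1] 0 + k) ∉ K := by
  classical
  obtain ⟨t, htK, htf⟩ := ht
  have hO : ∀ j, f^[j] 0 ∈ K := by
    intro j
    rcases Nat.eq_zero_or_pos j with rfl | hj
    · exact K.zero_mem
    · rw [← horb]
      exact AddSubgroup.subset_closure ⟨j, hj, rfl⟩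
  set A : Set (ZMod n) := {q | q ∈ K ∧ f q ∉ K} with hA
  have hHK : transStab A ≤ K := by
    intro h hh
    have h1 : t + h ∈ A := (hh t).2 ⟨htK, htf⟩
    exact (K.add_mem_cancel_left htK).1 h1.1
  have hex : ∃ i, f^[i] 0 ∉ transStab A := by
    by_contra! hcon
    have hle : K ≤ transStab A := by
      rw [← horb]
      refine (AddSubgroup.closure_le _).2 ?_
      rintro _ ⟨i, -, rfl⟩
      exact hcon i
    have h0 : t + -t ∈ A := (hle (K.neg_mem htK) t).2 ⟨htK, htf⟩
    rw [add_neg_cancel] at h0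
    exact h0.2 (hO 1)
  obtain ⟨i, hi, hmin⟩ : ∃ i, f^[i] 0 ∉ transStab A ∧ ∀ j < i, f^[j] 0 ∈ transStab A :=
    ⟨Nat.find hex, Nat.find_spec hex, fun j hj => not_not.1 (Nat.find_min hex hj)⟩
  have hi0 : i ≠ 0 := by
    rintro rfl
    exact hi (transStab A).zero_mem
  have hdex : ∃ d : ℕ, 0 < d ∧ (d : ZMod n) ∈ transStab A :=
    ⟨n, NeZero.pos n, by rw [ZMod.natCast_self]; exact (transStab A).zero_mem⟩
  obtain ⟨d, ⟨hd0, hdH⟩, hdmin⟩ : ∃ d : ℕ, (0 < d ∧ (d : ZMod n) ∈ transStab A) ∧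
      ∀ m < d, 0 < m → (m : ZMod n) ∉ transStab A :=
    ⟨Nat.find hdex, Nat.find_spec hdex, fun m hm h0 h => Nat.find_min hdex hm ⟨h0, h⟩⟩
  have hdi := mul_le_of_first_exit hdmin hi hmin
  obtain ⟨x, hxA, hxg⟩ := exists_entering hi
  have hxK : x ∈ K := (K.add_mem_cancel_right (hO i)).1 hxg.1
  -- `k` is the representative of `x + H` in `[0, d)`.
  set k := x.val % d with hk
  obtain ⟨h, hhH, hxk⟩ : ∃ h ∈ transStab A, (k : ZMod n) + h = x := by
    refine ⟨(x.val / d : ℕ) • (d : ZMod n), AddSubgroup.nsmul_mem _ hdH _, ?_⟩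
    conv_rhs => rw [← ZMod.natCast_zmod_val x, ← Nat.mod_add_div x.val d]
    push_cast
    rw [nsmul_eq_mul, mul_comm (d : ZMod n)]
  have hkK : (k : ZMod n) ∈ K := (K.add_mem_cancel_right (hHK hhH)).1 (hxk ▸ hxK)
  have hkA : (k : ZMod n) ∉ A := fun hh => hxA (hxk ▸ (hhH _).2 hh)
  have hkd : k + 1 < d := by
    have h1 : k < d := Nat.mod_lt _ hd0
    have h2 : k + 1 ≠ d := by
      intro h2
      have h3 := hHK hdH
      rw [← h2] at h3
      push_cast at h3
      exact (hK _).1 h3 hkK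
    omega
  obtain ⟨i, rfl⟩ := Nat.exists_eq_succ_of_ne_zero hi0
  refine ⟨i, k, ?_, ?_, ?_⟩
  · obtain ⟨e, he⟩ := Nat.exists_eq_add_of_lt hkd
    rw [he] at hdi
    nlinarith [Nat.zero_le ((k + e) * i)]
  · intro j hj
    by_contra hcon
    apply hkA
    refine (hmin j (by omega) _).1 ⟨K.add_mem hkK (hO j), ?_⟩
    rwa [add_comm]
  · have h1 : (k : ZMod n) + f^[i + 1] 0 ∈ A := by
      rw [← hhH, add_right_comm, hxk]
      exact hxg
    rw [add_comm]
    exact h1.2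

/-! ### Expansion of the orbit subgroup -/

/-- In a standardized completely reachable binary circular DFA on `ZMod n`
(`n` even) whose orbit subgroup equals `2ℤ_n`, the subset `K` is `(n+1)`-expandable. -/
theorem stmt9 {n : ℕ} [NeZero n] (hev : Even n) (δa : ZMod n → ZMod n)
    (hstd : Standardized δa) (hcr : CompletelyReachable δa)
    (hK : orbitSubgroup δa = AddSubgroup.zmultiples (2 : ZMod n)) :
    Expandable δa (n + 1) (orbitSubgroup δa : Set (ZMod n)) := by
  have hr := range_eq (two_le hev) δa hstd hcr
  have hpar : ∀ x, x + 1 ∈ orbitSubgroup δa ↔ x ∉ orbitSubgroup δa := by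
    rw [hK]
    exact add_one_mem_iff hev
  generalize horb : orbitSubgroup δa = K at hpar ⊢
  obtain ⟨i, k, hlen, hstay, hexit⟩ := exists_exponents hpar horb (exists_leaving hpar hcr hr)
  refine ⟨List.replicate (i + 1) Letter.a ++ (List.replicate k Letter.b ++ [Letter.a, Letter.b]),
    by simp; omega, ?_⟩
  -- The successive preimages of `K` along `b`, `a`, `b^k`, `a^i`, `a`.
  let T : Set (ZMod n) := δa ⁻¹' (K : Set (ZMod n))ᶜ
  let U : Set (ZMod n) := (fun q => q + (k : ZMod n)) ⁻¹' T
  let V : Set (ZMod n) := δa^[i] ⁻¹' U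
  have e1 : (fun q : ZMod n => q + 1) '' (K : Set (ZMod n))ᶜ = K := by
    have : (K : Set (ZMod n))ᶜ = (fun q : ZMod n => q + 1) ⁻¹' K := by
      ext x
      exact (hpar x).symm
    rw [this]
    exact Set.image_preimage_eq _ (Equiv.addRight (1 : ZMod n)).surjective
  have e2 : δa '' T = (K : Set (ZMod n))ᶜ := image_preimage hr (by simp [K.zero_mem])
  have e3 : (fun q => q + (k : ZMod n)) '' U = T :=
    Set.image_preimage_eq _ (Equiv.addRight (k : ZMod n)).surjective
  have e4 : δa^[i] '' V = U :=
    image_preimage_iterate hr i fun j hj hmem => hmem (hstay j hj.le)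
  have hV0 : (0 : ZMod n) ∉ V := fun hmem => hmem (hstay i le_rfl)
  have hVp : δa 0 ∈ V := hexit
  have e5 : δa '' (δa ⁻¹' V) = V := image_preimage hr hV0
  refine ⟨δa ⁻¹' V, ?_, ?_⟩
  · calc (K : Set (ZMod n)).ncard ≤ (K : Set (ZMod n))ᶜ.ncard := by
          conv_lhs => rw [← e1]
          exact Set.ncard_image_le (Set.toFinite _)
      _ ≤ T.ncard := by rw [← e2]; exact Set.ncard_image_le (Set.toFinite _)
      _ ≤ U.ncard := by
          conv_lhs => rw [← e3]
          exact Set.ncard_image_le (Set.toFinite _)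
      _ ≤ V.ncard := by
          conv_lhs => rw [← e4]
          exact Set.ncard_image_le (Set.toFinite _)
      _ < (δa ⁻¹' V).ncard := ncard_lt_preimage hstd hr hV0 hVp
  · have hact : act δa (List.replicate (i + 1) Letter.a ++
        (List.replicate k Letter.b ++ [Letter.a, Letter.b])) =
        (fun q => q + 1) ∘ δa ∘ (fun q => q + (k : ZMod n)) ∘ δa^[i] ∘ δa := by
      funext q
      rw [act_word]
      rfl
    rw [hact, Set.image_comp, Set.image_comp, Set.image_comp, Set.image_comp, e5, e4, e3, e2, e1]
end

section
/- In the DFA 𝒜_n (n even, n ≥ 10), the set ℤ_n \ {n−1, n−2} is the unique Π-predecessor of ℤ_n \ {n/2−1, n−1}: for every natural number i and every R ⊆ ℤ_n, if δ(R, a b^i) = ℤ_n \ {n/2−1, n−1} then R = ℤ_n \ {n−1, n−2}, and some word of the form a b^i does send ℤ_n \ {n−1, n−2} to ℤ_n \ {n/2−1, n−1}. -/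
/-- The action of the letter `a` in the DFA `𝒜_n` (for even `n ≥ 10`):
`0 ↦ n−3 ↦ 1 ↦ n−2 ↦ n/2 ↦ n−4 ↦ n−1 ↦ n/2`, all other states are fixed. -/
def deltaA (n : ℕ) : ZMod n → ZMod n := fun q =>
  if q = 0 then ((n - 3 : ℕ) : ZMod n)
  else if q = ((n - 3 : ℕ) : ZMod n) then 1
  else if q = 1 then ((n - 2 : ℕ) : ZMod n)
  else if q = ((n - 2 : ℕ) : ZMod n) then ((n / 2 : ℕ) : ZMod n)
  else if q = ((n / 2 : ℕ) : ZMod n) then ((n - 4 : ℕ) : ZMod n)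
  else if q = ((n - 4 : ℕ) : ZMod n) then ((n - 1 : ℕ) : ZMod n)
  else if q = ((n - 1 : ℕ) : ZMod n) then ((n / 2 : ℕ) : ZMod n)
  else q

/-!
The letter `a` misses exactly the state `0`, and its only collision is that both `n - 1` and
`n - 2` are sent to `h = n / 2` (`deltaA_ne_zero`, `exists_deltaA_eq`, `deltaA_eq_half_iff`,
`deltaA_injOn`). Hence a set `R` with `δ(R, a b^i) = S` can exist only if `0` lies outside
`S - i`. For `S = ℤ_n \ {h - 1, -1}` this forces `i = -1` or `i = h - 1` in `ℤ_n`, and since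
`2h = 0`, in both cases `S - i = ℤ_n \ {h, 0}`. The largest set that `a` maps into this set is the
complement of the fibre `{n - 1, n - 2}` over `h`, and `a` is injective on that complement, with
image exactly `ℤ_n \ {h, 0}`, so it is the only `a`-predecessor.
-/

/-- The word `a b^i` acts as `δ_a` followed by the translation by `i`. -/
lemma act_a_replicate_b {n : ℕ} (f : ZMod n → ZMod n) (i : ℕ) (q : ZMod n) :
    act f (Letter.a :: List.replicate i Letter.b) q = f q + i := by
  have h : ∀ (i : ℕ) (p : ZMod n), act f (List.replicate i Letter.b) p = p + i := by
    intro i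
    induction i with
    | zero => intro p; simp [act]
    | succ k ih =>
      intro p
      simp only [List.replicate_succ, act, ih]
      push_cast
      ring
  simp only [act, h]

/-- The seven states moved by `δ_a` are pairwise distinct. -/
lemma nodup_moved (n : ℕ) (hn : 10 ≤ n) :
    ([0, ((n - 3 : ℕ) : ZMod n), 1, ((n - 2 : ℕ) : ZMod n), ((n / 2 : ℕ) : ZMod n),
      ((n - 4 : ℕ) : ZMod n), ((n - 1 : ℕ) : ZMod n)] : List (ZMod n)).Nodup := by
  have key : ([0, n - 3, 1, n - 2, n / 2, n - 4, n - 1].map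
      (fun k : ℕ => (k : ZMod n))).Nodup := by
    refine List.Nodup.map_on ?_ ?_
    · intro x hx y hy hxy
      have hlt : ∀ z ∈ [0, n - 3, 1, n - 2, n / 2, n - 4, n - 1], z < n := by
        intro z hz
        simp only [List.mem_cons, List.not_mem_nil, or_false] at hz
        omega
      rw [ZMod.natCast_eq_natCast_iff'] at hxy
      rwa [Nat.mod_eq_of_lt (hlt x hx), Nat.mod_eq_of_lt (hlt y hy)] at hxy
    · simp only [List.nodup_cons, List.mem_cons, List.not_mem_nil, or_false, not_false_eq_true,
        List.nodup_nil, and_true]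
      omega
  simpa using key

lemma deltaA_ne_zero (n : ℕ) (hn : 10 ≤ n) (q : ZMod n) : deltaA n q ≠ 0 := by
  have h := nodup_moved n hn
  simp only [List.nodup_cons, List.mem_cons, List.not_mem_nil, or_false, not_or] at h
  unfold deltaA
  grind

lemma deltaA_eq_half_iff (n : ℕ) (hn : 10 ≤ n) (q : ZMod n) :
    deltaA n q = ((n / 2 : ℕ) : ZMod n) ↔
      q = ((n - 1 : ℕ) : ZMod n) ∨ q = ((n - 2 : ℕ) : ZMod n) := by
  have h := nodup_moved n hn
  simp only [List.nodup_cons, List.mem_cons, List.not_mem_nil, or_false, not_or] at h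
  unfold deltaA
  grind

/-- A one-sided inverse of `δ_a`: it picks the preimage of each nonzero state, choosing `n - 2`
among the two preimages of `n / 2`. -/
def deltaAInv (n : ℕ) : ZMod n → ZMod n := fun p =>
  if p = ((n - 3 : ℕ) : ZMod n) then 0
  else if p = 1 then ((n - 3 : ℕ) : ZMod n)
  else if p = ((n - 2 : ℕ) : ZMod n) then 1
  else if p = ((n / 2 : ℕ) : ZMod n) then ((n - 2 : ℕ) : ZMod n)
  else if p = ((n - 4 : ℕ) : ZMod n) then ((n / 2 : ℕ) : ZMod n)
  else if p = ((n - 1 : ℕ) : ZMod n) then ((n - 4 : ℕ) : ZMod n)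
  else p

lemma deltaAInv_deltaA (n : ℕ) (hn : 10 ≤ n) (q : ZMod n)
    (hq : deltaA n q ≠ ((n / 2 : ℕ) : ZMod n)) : deltaAInv n (deltaA n q) = q := by
  have h := nodup_moved n hn
  simp only [List.nodup_cons, List.mem_cons, List.not_mem_nil, or_false, not_or] at h
  revert hq
  unfold deltaA
  split_ifs <;> intro hq <;> unfold deltaAInv <;> grind

/-- Away from the fibre over `n / 2`, the map `δ_a` is injective. -/
lemma deltaA_injOn (n : ℕ) (hn : 10 ≤ n) (q r : ZMod n)
    (hq : deltaA n q ≠ ((n / 2 : ℕ) : ZMod n)) (hqr : deltaA n q = deltaA n r) : q = r := by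
  rw [← deltaAInv_deltaA n hn q hq, hqr, deltaAInv_deltaA n hn r (hqr ▸ hq)]

lemma exists_deltaA_eq (n : ℕ) (hn : 10 ≤ n) (p : ZMod n) (hp : p ≠ 0) :
    ∃ q, deltaA n q = p := by
  have h := nodup_moved n hn
  simp only [List.nodup_cons, List.mem_cons, List.not_mem_nil, or_false, not_or] at h
  refine ⟨deltaAInv n p, ?_⟩
  unfold deltaAInv
  split_ifs <;> unfold deltaA <;> grind

/-- In `𝒜_n` (`n` even, `n ≥ 10`), `ℤ_n \ {n−1, n−2}` is the unique
`Π`-predecessor of `ℤ_n \ {n/2−1, n−1}`, and it indeed is a `Π`-predecessor. -/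
theorem stmt14 (n : ℕ) (hn : 10 ≤ n) (hev : Even n) :
    (∀ (i : ℕ) (R : Set (ZMod n)),
      act (deltaA n) (Letter.a :: List.replicate i Letter.b) '' R =
        Set.univ \ {((n / 2 - 1 : ℕ) : ZMod n), ((n - 1 : ℕ) : ZMod n)} →
      R = Set.univ \ {((n - 1 : ℕ) : ZMod n), ((n - 2 : ℕ) : ZMod n)}) ∧
    ∃ i : ℕ,
      act (deltaA n) (Letter.a :: List.replicate i Letter.b) ''
          (Set.univ \ {((n - 1 : ℕ) : ZMod n), ((n - 2 : ℕ) : ZMod n)}) =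
        Set.univ \ {((n / 2 - 1 : ℕ) : ZMod n), ((n - 1 : ℕ) : ZMod n)} := by
  have hn1 : ((n - 1 : ℕ) : ZMod n) = -1 := by
    rw [Nat.cast_sub (by omega)]
    simp
  have hh1 : ((n / 2 - 1 : ℕ) : ZMod n) = ((n / 2 : ℕ) : ZMod n) - 1 := by
    rw [Nat.cast_sub (by omega)]
    simp
  have hhh : ((n / 2 : ℕ) : ZMod n) + ((n / 2 : ℕ) : ZMod n) = 0 := by
    have h2 : n / 2 + n / 2 = n := by obtain ⟨m, rfl⟩ := hev; omega
    rw [← Nat.cast_add, h2, ZMod.natCast_self]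
  have hE := deltaA_eq_half_iff n hn
  have hinj := deltaA_injOn n hn
  have h0 := deltaA_ne_zero n hn
  have hsurj := exists_deltaA_eq n hn
  constructor
  · intro i R hR
    have hmem : ∀ p : ZMod n, (∃ q ∈ R, deltaA n q + i = p) ↔
        ¬ (p = ((n / 2 : ℕ) : ZMod n) - 1 ∨ p = -1) := by
      intro p
      have := Set.ext_iff.mp hR p
      simpa only [Set.mem_image, act_a_replicate_b, Set.mem_sdiff, Set.mem_univ, true_and,
        Set.mem_insert_iff, Set.mem_singleton_iff, hh1, hn1] using this
    -- The state `i = 0 + i` is not in the image, which leaves two values of `i` modulo `n`.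
    have hi : (i : ZMod n) = ((n / 2 : ℕ) : ZMod n) - 1 ∨ (i : ZMod n) = -1 := by
      by_contra hcon
      obtain ⟨q, -, hq⟩ := (hmem i).mpr hcon
      exact h0 q (by simpa using hq)
    -- Undoing the translation by `i` gives the same set in both cases, because `2 (n / 2) = 0`.
    have hR' : ∀ p : ZMod n, (∃ q ∈ R, deltaA n q = p) ↔
        ¬ (p = ((n / 2 : ℕ) : ZMod n) ∨ p = 0) := by
      intro p
      have h := hmem (p + i)
      simp only [add_left_inj] at h
      rw [h]
      rcases hi with hi | hi <;> rw [hi] <;> grind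
    ext q
    simp only [Set.mem_sdiff, Set.mem_univ, true_and, Set.mem_insert_iff, Set.mem_singleton_iff,
      ← hE]
    constructor
    · intro hq hq'
      exact (hR' _).mp ⟨q, hq, rfl⟩ (Or.inl hq')
    · intro hq
      obtain ⟨r, hr, hrq⟩ := (hR' (deltaA n q)).mpr (by simp [hq, h0])
      rwa [hinj q r hq hrq.symm]
  · refine ⟨n - 1, ?_⟩
    ext p
    simp only [Set.mem_image, act_a_replicate_b, Set.mem_sdiff, Set.mem_univ, true_and,
      Set.mem_insert_iff, Set.mem_singleton_iff, ← hE, hh1]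
    rw [hn1]
    constructor
    · rintro ⟨q, hq, rfl⟩
      have := h0 q
      grind
    · intro hp
      obtain ⟨q, hq⟩ := hsurj (p + 1) (by grind)
      exact ⟨q, by grind, by grind⟩
end

section
/- In the DFA 𝒜_n (n even, n ≥ 10), every word w with δ(ℤ_n, w) = ℤ_n \ {n−1, n/2−1} has length at least (5/2)·n − 3. -/
/-! ### The letter `a` on representatives -/

/-- The map `δ_a` written on the representatives `0, …, n-1`. -/
def natA (n v : ℕ) : ℕ :=
  if v = 0 then n - 3
  else if v = n - 3 then 1
  else if v = 1 then n - 2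
  else if v = n - 2 then n / 2
  else if v = n / 2 then n - 4
  else if v = n - 4 then n - 1
  else if v = n - 1 then n / 2
  else v

theorem eq_cast_iff {n c : ℕ} (hc : c < n) (q : ZMod n) :
    q = (c : ZMod n) ↔ q.val = c := by
  have : NeZero n := ⟨by omega⟩
  constructor
  · rintro rfl
    exact ZMod.val_cast_of_lt hc
  · rintro rfl
    exact (ZMod.natCast_zmod_val q).symm

theorem val_deltaA {n : ℕ} (hn : 10 ≤ n) (q : ZMod n) :
    (deltaA n q).val = natA n q.val := by
  have h0 : q = 0 ↔ q.val = 0 := by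
    have h := eq_cast_iff (c := 0) (by omega : 0 < n) q
    rwa [Nat.cast_zero] at h
  have h1 : q = 1 ↔ q.val = 1 := by
    simpa using eq_cast_iff (c := 1) (by omega : 1 < n) q
  have v1 : (1 : ZMod n).val = 1 := by
    simpa using ZMod.val_cast_of_lt (by omega : 1 < n)
  unfold deltaA natA
  simp only [h0, h1, eq_cast_iff (by omega : n - 3 < n), eq_cast_iff (by omega : n - 2 < n),
    eq_cast_iff (by omega : n - 4 < n), eq_cast_iff (by omega : n - 1 < n),
    eq_cast_iff (by omega : n / 2 < n)]
  split_ifs <;> first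
    | exact v1
    | rfl
    | exact ZMod.val_cast_of_lt (by omega)

theorem natA_lt {n v : ℕ} (hn : 10 ≤ n) (hv : v < n) : natA n v < n := by
  unfold natA; split_ifs <;> omega

theorem natA_ne_zero {n v : ℕ} (hn : 10 ≤ n) : natA n v ≠ 0 := by
  unfold natA; split_ifs <;> omega

theorem natA_eq_one {n v : ℕ} (hn : 10 ≤ n) (h : natA n v = 1) : v = n - 3 := by
  unfold natA at h; split_ifs at h <;> omega

theorem natA_eq_pred {n v : ℕ} (hn : 10 ≤ n) (h : natA n v = n - 1) : v = n - 4 := by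
  unfold natA at h; split_ifs at h <;> omega

theorem natA_eq_half {n v : ℕ} (hn : 10 ≤ n) (h : natA n v = n / 2) :
    v = n - 2 ∨ v = n - 1 := by
  unfold natA at h; split_ifs at h <;> omega

set_option maxHeartbeats 2000000 in
theorem natA_inj {n u v : ℕ} (hn : 10 ≤ n) (h : natA n u = natA n v) :
    u = v ∨ ((u = n - 2 ∨ u = n - 1) ∧ (v = n - 2 ∨ v = n - 1)) := by
  unfold natA at h; split_ifs at h <;> omega

/-- Every nonzero state has an `a`-preimage; the state `n/2` has both `n-2` and `n-1`, so one of
them can be prescribed as avoided. -/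
theorem natA_surj {n u : ℕ} (hn : 10 ≤ n) (hu : u < n) (hu0 : u ≠ 0) (x : ℕ)
    (hx : x = n - 2 ∨ x = n - 1) : ∃ v < n, v ≠ x ∧ natA n v = u := by
  by_cases h1 : u = 1
  · exact ⟨n - 3, by omega, by omega, by unfold natA; split_ifs <;> omega⟩
  by_cases h2 : u = n - 3
  · exact ⟨0, by omega, by omega, by unfold natA; split_ifs <;> omega⟩
  by_cases h3 : u = n - 2
  · have h13 : 1 ≠ n - 3 := by omega
    exact ⟨1, by omega, by omega, by simp [natA, h13, h3]⟩
  by_cases h4 : u = n - 4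
  · exact ⟨n / 2, by omega, by omega, by unfold natA; split_ifs <;> omega⟩
  by_cases h5 : u = n - 1
  · exact ⟨n - 4, by omega, by omega, by unfold natA; split_ifs <;> omega⟩
  by_cases h6 : u = n / 2
  · rcases hx with rfl | rfl
    · exact ⟨n - 1, by omega, by omega, by unfold natA; split_ifs <;> omega⟩
    · exact ⟨n - 2, by omega, by omega, by unfold natA; split_ifs <;> omega⟩
  · exact ⟨u, hu, by omega, by unfold natA; split_ifs <;> omega⟩

/-! ### The invariant -/

/-- The invariant relating an image `T` of the full state set to the length `L` of the word used:
`T` misses nothing, or one state `x` with `L ≥ x + 1`, or exactly two states `x` and `y = x + d`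
with `L ≥ x + f(d)`, or at least three states.  The four inequalities in the third alternative
encode `f(d) ≥ 2` for all `d`, `f(1) = n - 1`, `f(-1) = n - 2` and `f(n/2) = 2n - 2`, the hypotheses
of the implications spelling out `d` on representatives. -/
def MissInv (n : ℕ) (T : Set (ZMod n)) (L : ℕ) : Prop :=
  (∀ q, q ∈ T) ∨
  (∃ x < n, (∀ q : ZMod n, q ∈ T ↔ q.val ≠ x) ∧ x + 1 ≤ L) ∨
  (∃ x < n, ∃ y < n, x ≠ y ∧ (∀ q : ZMod n, q ∈ T ↔ q.val ≠ x ∧ q.val ≠ y) ∧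
    x + 2 ≤ L ∧
    (y = x + 1 ∨ (x = n - 1 ∧ y = 0) → x + (n - 1) ≤ L) ∧
    (x = y + 1 ∨ (x = 0 ∧ y = n - 1) → x + (n - 2) ≤ L) ∧
    (y = x + n / 2 ∨ x = y + n / 2 → x + (2 * n - 2) ≤ L)) ∨
  T.ncard + 3 ≤ n

/-! ### Preservation under the letter `a` -/

theorem mem_image_a {n : ℕ} (hn : 10 ≤ n) (T : Set (ZMod n)) (q : ZMod n) :
    q ∈ deltaA n '' T ↔ ∃ p ∈ T, natA n p.val = q.val := by
  have : NeZero n := ⟨by omega⟩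
  simp only [Set.mem_image, ← val_deltaA hn, (ZMod.val_injective n).eq_iff]

/-- If membership in `T` is decided by a predicate on representatives, so is membership in the
image of `T` under `a`. -/
theorem mem_image_a_of {n : ℕ} (hn : 10 ≤ n) {T : Set (ZMod n)} {Q : ℕ → Prop}
    (hT : ∀ q : ZMod n, q ∈ T ↔ Q q.val) (q : ZMod n) :
    q ∈ deltaA n '' T ↔ ∃ v < n, Q v ∧ natA n v = q.val := by
  have : NeZero n := ⟨by omega⟩
  rw [mem_image_a hn]
  constructor
  · rintro ⟨p, hp, h⟩
    exact ⟨p.val, ZMod.val_lt p, (hT p).1 hp, h⟩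
  · rintro ⟨v, hv, hQ, h⟩
    have e : ((v : ℕ) : ZMod n).val = v := ZMod.val_cast_of_lt hv
    exact ⟨v, (hT _).2 (by rwa [e]), by rwa [e]⟩

theorem ncard_add_three_le {n : ℕ} {T : Set (ZMod n)} {x y z : ℕ} (hx : x < n) (hy : y < n)
    (hz : z < n) (hxy : x ≠ y) (hxz : x ≠ z) (hyz : y ≠ z)
    (h : ∀ q ∈ T, q.val ≠ x ∧ q.val ≠ y ∧ q.val ≠ z) : T.ncard + 3 ≤ n := by
  have : NeZero n := ⟨by omega⟩
  have inj : ∀ {c d : ℕ}, c < n → d < n → c ≠ d → (c : ZMod n) ≠ (d : ZMod n) := by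
    intro c d hc hd hcd e
    rw [eq_cast_iff hd, ZMod.val_cast_of_lt hc] at e
    exact hcd e
  have h3 : ({(x : ZMod n), (y : ZMod n), (z : ZMod n)} : Set (ZMod n)).ncard = 3 :=
    Set.ncard_eq_three.2 ⟨_, _, _, inj hx hy hxy, inj hx hz hxz, inj hy hz hyz, rfl⟩
  have hd : Disjoint T {(x : ZMod n), (y : ZMod n), (z : ZMod n)} := by
    rw [Set.disjoint_left]
    intro q hq hm
    have := h q hq
    simp only [Set.mem_insert_iff, Set.mem_singleton_iff, eq_cast_iff hx, eq_cast_iff hy,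
      eq_cast_iff hz] at hm
    omega
  rw [← h3, ← Set.ncard_union_eq hd]
  exact (Set.ncard_le_card _).trans (by simp)

theorem MissInv.image_ncard {n L : ℕ} [NeZero n] {T : Set (ZMod n)} (f : ZMod n → ZMod n)
    (h : T.ncard + 3 ≤ n) : MissInv n (f '' T) L :=
  Or.inr (Or.inr (Or.inr (by have := Set.ncard_image_le (f := f) T.toFinite; omega)))

/-- One step `a` from a missing pair `{x, y}` with `x ∈ {n-2, n-1}`: the new missing pair is
`{0, δ_a(y)}`. -/
theorem image_a_pair {n x y : ℕ} (hn : 10 ≤ n) {T : Set (ZMod n)}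
    (hx : x = n - 2 ∨ x = n - 1) (hxy : x ≠ y)
    (hT : ∀ q : ZMod n, q ∈ T ↔ q.val ≠ x ∧ q.val ≠ y) (q : ZMod n) :
    q ∈ deltaA n '' T ↔ q.val ≠ 0 ∧ q.val ≠ natA n y := by
  have : NeZero n := ⟨by omega⟩
  rw [mem_image_a_of hn (Q := fun v => v ≠ x ∧ v ≠ y) hT]
  constructor
  · rintro ⟨v, hv, ⟨hvx, hvy⟩, h⟩
    rw [← h]
    refine ⟨natA_ne_zero hn, fun e => ?_⟩
    have := natA_inj hn e
    omega
  · rintro ⟨h0, hy⟩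
    obtain ⟨v, hv, hvx, h⟩ := natA_surj hn (ZMod.val_lt q) h0 x hx
    exact ⟨v, hv, ⟨hvx, fun e => hy (by rw [← h, e])⟩, h⟩

theorem inv_a {n L : ℕ} (hn : 10 ≤ n) {T : Set (ZMod n)} (h : MissInv n T L) :
    MissInv n (deltaA n '' T) (L + 1) := by
  have : NeZero n := ⟨by omega⟩
  rcases h with h | ⟨x, hx, hT, hL⟩ | ⟨x, hx, y, hy, hxy, hT, hL, hL1, hL2, hL3⟩ | h
  · refine Or.inr (Or.inl ⟨0, by omega, fun q => ?_, by omega⟩)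
    rw [mem_image_a_of hn (Q := fun _ => True) (by simp [h])]
    constructor
    · rintro ⟨v, -, -, h⟩
      rw [← h]; exact natA_ne_zero hn
    · intro h0
      obtain ⟨v, hv, -, h⟩ := natA_surj hn (ZMod.val_lt q) h0 (n - 1) (Or.inr rfl)
      exact ⟨v, hv, trivial, h⟩
  · by_cases hx2 : x = n - 2 ∨ x = n - 1
    · refine Or.inr (Or.inl ⟨0, by omega, fun q => ?_, by omega⟩)
      rw [mem_image_a_of hn (Q := fun v => v ≠ x) hT]
      constructor
      · rintro ⟨v, -, -, h⟩
        rw [← h]; exact natA_ne_zero hn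
      · intro h0
        exact natA_surj hn (ZMod.val_lt q) h0 x hx2
    · have e1 := @natA_eq_one n x hn
      have e2 := @natA_eq_pred n x hn
      have e3 := @natA_eq_half n x hn
      have e0 := @natA_ne_zero n x hn
      have el := natA_lt hn hx
      refine Or.inr (Or.inr (Or.inl ⟨0, by omega, natA n x, el, e0.symm, fun q => ?_, by omega,
        by omega, by omega, by omega⟩))
      rw [mem_image_a_of hn (Q := fun v => v ≠ x) hT]
      constructor
      · rintro ⟨v, hv, hvx, h⟩
        rw [← h]
        refine ⟨natA_ne_zero hn, fun e => ?_⟩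
        have := natA_inj hn e
        omega
      · rintro ⟨h0, h1⟩
        obtain ⟨v, hv, -, h⟩ := natA_surj hn (ZMod.val_lt q) h0 (n - 1) (Or.inr rfl)
        exact ⟨v, hv, fun e => h1 (by rw [← h, e]), h⟩
  · by_cases hx2 : x = n - 2 ∨ x = n - 1
    · have e1 := @natA_eq_one n y hn
      have e2 := @natA_eq_pred n y hn
      have e3 := @natA_eq_half n y hn
      have e0 := @natA_ne_zero n y hn
      exact Or.inr (Or.inr (Or.inl ⟨0, by omega, natA n y, natA_lt hn hy, e0.symm,
        image_a_pair hn hx2 hxy hT, by omega, by omega, by omega, by omega⟩))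
    by_cases hy2 : y = n - 2 ∨ y = n - 1
    · have e1 := @natA_eq_one n x hn
      have e2 := @natA_eq_pred n x hn
      have e3 := @natA_eq_half n x hn
      have e0 := @natA_ne_zero n x hn
      exact Or.inr (Or.inr (Or.inl ⟨0, by omega, natA n x, natA_lt hn hx, e0.symm,
        image_a_pair hn hy2 hxy.symm (fun q => (hT q).trans and_comm),
        by omega, by omega, by omega, by omega⟩))
    · refine Or.inr (Or.inr (Or.inr (ncard_add_three_le (x := 0) (by omega)
        (natA_lt hn hx) (natA_lt hn hy) (natA_ne_zero hn).symm (natA_ne_zero hn).symm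
        (fun e => ?_) fun q hq => ?_)))
      · have := natA_inj hn e
        omega
      · rw [mem_image_a_of hn (Q := fun v => v ≠ x ∧ v ≠ y) hT] at hq
        obtain ⟨v, hv, hvxy, h⟩ := hq
        rw [← h]
        refine ⟨natA_ne_zero hn, fun e => ?_, fun e => ?_⟩ <;>
        · have := natA_inj hn e
          omega
  · exact MissInv.image_ncard _ h

/-! ### Preservation under the letter `b` -/

/-- The successor of a representative modulo `n`. -/
def natB (n v : ℕ) : ℕ := if v = n - 1 then 0 else v + 1

theorem natB_spec (n v : ℕ) :
    (v = n - 1 ∧ natB n v = 0) ∨ (v ≠ n - 1 ∧ natB n v = v + 1) := by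
  unfold natB; split_ifs with h
  · exact Or.inl ⟨h, rfl⟩
  · exact Or.inr ⟨h, rfl⟩

theorem val_add_one_eq_natB {n : ℕ} (hn : 10 ≤ n) (q : ZMod n) : (q + 1).val = natB n q.val := by
  have : NeZero n := ⟨by omega⟩
  have : Fact (1 < n) := ⟨by omega⟩
  have hq := ZMod.val_lt q
  rw [ZMod.val_add, ZMod.val_one]
  unfold natB
  split_ifs with h
  · rw [h, Nat.sub_add_cancel (by omega), Nat.mod_self]
  · exact Nat.mod_eq_of_lt (by omega)

theorem mem_image_b {n : ℕ} (T : Set (ZMod n)) (q : ZMod n) :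
    q ∈ (fun q : ZMod n => q + 1) '' T ↔ q - 1 ∈ T := by
  constructor
  · rintro ⟨p, hp, rfl⟩
    simpa using hp
  · intro h
    exact ⟨q - 1, h, by simp⟩

theorem val_sub_one_ne {n x : ℕ} (hn : 10 ≤ n) (hx : x < n) (q : ZMod n) :
    (q - 1).val ≠ x ↔ q.val ≠ natB n x := by
  have : NeZero n := ⟨by omega⟩
  have h := val_add_one_eq_natB hn (q - 1)
  rw [sub_add_cancel] at h
  have hq := ZMod.val_lt (q - 1)
  rw [h]
  unfold natB
  split_ifs <;> omega

theorem inv_b {n L : ℕ} (hn : 10 ≤ n) (hev : Even n) {T : Set (ZMod n)} (h : MissInv n T L) :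
    MissInv n ((fun q : ZMod n => q + 1) '' T) (L + 1) := by
  have : NeZero n := ⟨by omega⟩
  have hm : 2 * (n / 2) = n := Nat.two_mul_div_two_of_even hev
  rcases h with h | ⟨x, hx, hT, hL⟩ | ⟨x, hx, y, hy, hxy, hT, hL, hL1, hL2, hL3⟩ | h
  · exact Or.inl fun q => (mem_image_b T q).2 (h _)
  · refine Or.inr (Or.inl ⟨natB n x, ?_, fun q => ?_, ?_⟩)
    · unfold natB; split_ifs <;> omega
    · rw [mem_image_b, hT, val_sub_one_ne hn hx]
    · unfold natB; split_ifs <;> omega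
  · refine Or.inr (Or.inr (Or.inl ⟨natB n x, ?_, natB n y, ?_, ?_, fun q => ?_, ?_⟩))
    · unfold natB; split_ifs <;> omega
    · unfold natB; split_ifs <;> omega
    · unfold natB; split_ifs <;> omega
    · rw [mem_image_b, hT, val_sub_one_ne hn hx, val_sub_one_ne hn hy]
    · have ex := natB_spec n x
      have ey := natB_spec n y
      exact ⟨by omega, by omega, by omega, by omega⟩
  · exact MissInv.image_ncard _ h

/-! ### The length bound -/

theorem inv_act {n : ℕ} (hn : 10 ≤ n) (hev : Even n) (w : List Letter) :
    ∀ (T : Set (ZMod n)) (L : ℕ), MissInv n T L → MissInv n (act (deltaA n) w '' T) (L + w.length) := by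
  induction w with
  | nil =>
    intro T L h
    have e : act (deltaA n) [] = id := rfl
    simpa [e] using h
  | cons l w ih =>
    intro T L h
    have hlen : L + (l :: w).length = (L + 1) + w.length := by simp; omega
    rw [hlen]
    cases l with
    | a =>
      have e : act (deltaA n) (Letter.a :: w) = act (deltaA n) w ∘ deltaA n := rfl
      rw [e, Set.image_comp]
      exact ih _ _ (inv_a hn h)
    | b =>
      have e : act (deltaA n) (Letter.b :: w) = act (deltaA n) w ∘ (fun q => q + 1) := rfl
      rw [e, Set.image_comp]
      exact ih _ _ (inv_b hn hev h)

/-- In `𝒜_n` (`n` even, `n ≥ 10`), every reaching word of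
`ℤ_n \ {n−1, n/2−1}` has length at least `(5/2)·n − 3`. -/
theorem stmt17 (n : ℕ) (hn : 10 ≤ n) (hev : Even n)
    (w : List Letter)
    (hw : act (deltaA n) w '' Set.univ =
      Set.univ \ {((n - 1 : ℕ) : ZMod n), ((n / 2 - 1 : ℕ) : ZMod n)}) :
    5 * n / 2 - 3 ≤ w.length := by
  have : NeZero n := ⟨by omega⟩
  have key := inv_act hn hev w Set.univ 0 (Or.inl fun q => Set.mem_univ q)
  rw [hw, Nat.zero_add] at key
  have hm : 2 * (n / 2) = n := Nat.two_mul_div_two_of_even hev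
  have hmem : ∀ q : ZMod n, q ∈ (Set.univ \
      {((n - 1 : ℕ) : ZMod n), ((n / 2 - 1 : ℕ) : ZMod n)} : Set (ZMod n)) ↔
      q.val ≠ n - 1 ∧ q.val ≠ n / 2 - 1 := by
    intro q
    simp only [Set.mem_sdiff, Set.mem_univ, true_and, Set.mem_insert_iff, Set.mem_singleton_iff,
      eq_cast_iff (by omega : n - 1 < n), eq_cast_iff (by omega : n / 2 - 1 < n), not_or]
  have v1 : ((n - 1 : ℕ) : ZMod n).val = n - 1 := ZMod.val_cast_of_lt (by omega)
  have v2 : ((n / 2 - 1 : ℕ) : ZMod n).val = n / 2 - 1 := ZMod.val_cast_of_lt (by omega)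
  rcases key with h | ⟨x, hx, hT, -⟩ | ⟨x, hx, y, hy, hxy, hT, -, -, -, hL3⟩ | h
  · exact absurd rfl (v1 ▸ ((hmem _).1 (h ((n - 1 : ℕ) : ZMod n))).1)
  · have a1 := (hmem ((n - 1 : ℕ) : ZMod n)).symm.trans (hT _)
    have a2 := (hmem ((n / 2 - 1 : ℕ) : ZMod n)).symm.trans (hT _)
    rw [v1] at a1
    rw [v2] at a2
    omega
  · have a1 := (hmem ((n - 1 : ℕ) : ZMod n)).symm.trans (hT _)
    have a2 := (hmem ((n / 2 - 1 : ℕ) : ZMod n)).symm.trans (hT _)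
    rw [v1] at a1
    rw [v2] at a2
    omega
  · have hc := Set.ncard_add_ncard_compl
      ({((n - 1 : ℕ) : ZMod n), ((n / 2 - 1 : ℕ) : ZMod n)} : Set (ZMod n))
    have h2 := Set.ncard_insert_le ((n - 1 : ℕ) : ZMod n) {((n / 2 - 1 : ℕ) : ZMod n)}
    rw [Set.ncard_singleton] at h2
    rw [Nat.card_eq_fintype_card, ZMod.card, Set.compl_eq_univ_sdiff] at hc
    omega
end

section
/- Let 𝒜 be a binary completely reachable circular DFA on ℤ_n and let k be a positive integer such that the DFA 𝒜^k (with letter maps δ_{a_k}(q) = δ_a(q + k) and δ_b) is standardized and completely reachable. Then every nonempty proper subset S ⊆ ℤ_n with |S| = s has a reaching word in 𝒜 of length at most (n − s)·n + n − 1 + k·(2n − s − 1). -/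
namespace Stmt19

/-! ### Words and expansion -/

lemma act_append {n : ℕ} (δ : ZMod n → ZMod n) (u v : List Letter) (q : ZMod n) :
    act δ (u ++ v) q = act δ v (act δ u q) := by
  induction u generalizing q with
  | nil => rfl
  | cons l u ih => cases l <;> simp [act, ih]

lemma act_append_image {n : ℕ} (δ : ZMod n → ZMod n) (u v : List Letter) (T : Set (ZMod n)) :
    act δ (u ++ v) '' T = act δ v '' (act δ u '' T) := by
  rw [Set.image_image]
  simp only [act_append]

lemma act_replicate_b {n : ℕ} (δ : ZMod n → ZMod n) (x : ℕ) (q : ZMod n) :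
    act δ (List.replicate x Letter.b) q = q + x := by
  induction x generalizing q with
  | zero => simp [act]
  | succ x ih => simp [List.replicate_succ, act, ih]; ring

/-- `T` is the image of a larger set under a word of length at most `L`. -/
def Expands {n : ℕ} (δ : ZMod n → ZMod n) (T : Set (ZMod n)) (L : ℕ) : Prop :=
  ∃ (T' : Set (ZMod n)) (w : List Letter),
    T.ncard < T'.ncard ∧ act δ w '' T' = T ∧ w.length ≤ L

/-- The translate `T - x`. -/
def shift {n : ℕ} (x : ZMod n) (T : Set (ZMod n)) : Set (ZMod n) := {q | q + x ∈ T}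

lemma ncard_shift {n : ℕ} (x : ZMod n) (T : Set (ZMod n)) : (shift x T).ncard = T.ncard := by
  apply Set.ncard_preimage_of_injective_subset_range (add_left_injective x)
  intro y _
  exact ⟨y - x, by simp⟩

lemma Expands.mono {n : ℕ} {δ : ZMod n → ZMod n} {T : Set (ZMod n)} {L L' : ℕ}
    (h : Expands δ T L) (hL : L ≤ L') : Expands δ T L' := by
  obtain ⟨T', w, h1, h2, h3⟩ := h
  exact ⟨T', w, h1, h2, h3.trans hL⟩

lemma Expands.of_shift {n : ℕ} {δ : ZMod n → ZMod n} {T : Set (ZMod n)} {L : ℕ} (x : ℕ)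
    (h : Expands δ (shift (x : ZMod n) T) L) : Expands δ T (L + x) := by
  obtain ⟨T', w, h1, h2, h3⟩ := h
  refine ⟨T', w ++ List.replicate x Letter.b, by rwa [ncard_shift] at h1, ?_, by simpa⟩
  rw [act_append_image, h2]
  ext q
  simp only [Set.mem_image, act_replicate_b, shift, Set.mem_ofPred_eq]
  constructor
  · rintro ⟨y, hy, rfl⟩; exact hy
  · intro hq; exact ⟨q - x, by simpa, by simp⟩

/-- The action of the letter `a_k` of `𝒜^k`, that is, of the word `b^k a`. -/
def letterC {n : ℕ} (δ : ZMod n → ZMod n) (k : ℕ) (q : ZMod n) : ZMod n := δ (q + k)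

lemma act_wordC {n : ℕ} (δ : ZMod n → ZMod n) (k : ℕ) :
    act δ (List.replicate k Letter.b ++ [Letter.a]) = letterC δ k := by
  funext q
  simp [act_append, act_replicate_b, act, letterC]

/-! ### Consequences of complete reachability of a standardized automaton -/

/-- In a completely reachable automaton with `0` outside the range of `c`, the state `0` is the only
one outside that range: the last letter `c` of a word reaching the complement of a point has
a range containing the complement of a point. -/
lemma exists_preimage {n : ℕ} {c : ZMod n → ZMod n} (h0 : ∀ q, c q ≠ 0)
    (hcr : CompletelyReachable c) {p : ZMod n} (hp : p ≠ 0) : ∃ q, c q = p := by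
  have key : ∀ (w : List Letter) (x : ZMod n), act c w '' Set.univ = {x}ᶜ →
      ∀ p : ZMod n, p ≠ 0 → ∃ q, c q = p := by
    intro w
    induction w using List.reverseRecOn with
    | nil =>
      intro x hx
      exfalso
      have : x ∈ ({x}ᶜ : Set (ZMod n)) := by rw [← hx]; exact ⟨x, trivial, rfl⟩
      exact this rfl
    | append_singleton w l ih =>
      intro x hx
      rw [act_append_image] at hx
      cases l with
      | a =>
        intro p hp
        have hsub : ∀ y, y ≠ x → ∃ q, c q = y := by
          intro y hy
          have : y ∈ act c [Letter.a] '' (act c w '' Set.univ) := by rw [hx]; exact hy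
          obtain ⟨q, _, hq⟩ := this
          exact ⟨q, hq⟩
        by_cases hx0 : x = 0
        · exact hsub p (hx0 ▸ hp)
        · obtain ⟨q, hq⟩ := hsub 0 (Ne.symm hx0)
          exact absurd hq (h0 q)
      | b =>
        apply ih (x - 1)
        ext q
        have : q + 1 ∈ act c [Letter.b] '' (act c w '' Set.univ) ↔ q + 1 ∈ ({x}ᶜ : Set (ZMod n)) :=
          by rw [hx]
        have e : q + 1 ∈ act c [Letter.b] '' (act c w '' Set.univ) ↔ q ∈ act c w '' Set.univ := by
          constructor
          · rintro ⟨y, hy, hyq⟩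
            have : y = q := by simpa [act] using hyq
            exact this ▸ hy
          · intro hq
            exact ⟨q, hq, rfl⟩
        rw [← e, this]
        simp [eq_sub_iff_add_eq]
  obtain ⟨w, hw⟩ := hcr ({0}ᶜ) ⟨p, hp⟩
  exact key w 0 hw p hp

/-- A proper subgroup invariant under `c` is also invariant backwards, so that the complements of
its cosets are only reached from one another. -/
lemma eq_top_of_maps_to {n : ℕ} [NeZero n] {c : ZMod n → ZMod n} (hstd : Standardized c)
    (hcr : CompletelyReachable c) (M : AddSubgroup (ZMod n)) (hM : ∀ x ∈ M, c x ∈ M) :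
    M = ⊤ := by
  by_contra htop
  have hne : ((M : Set (ZMod n))ᶜ).Nonempty := by
    rw [Set.nonempty_compl]
    intro h
    exact htop (by ext x; simpa using (Set.ext_iff.mp h x))
  have hsub : (M : Set (ZMod n))ᶜ ⊆ c '' (M : Set (ZMod n))ᶜ := by
    intro y hy
    obtain ⟨q, hq⟩ := exists_preimage hstd.1 hcr (p := y) (fun h => hy (h ▸ M.zero_mem))
    exact ⟨q, fun hqM => hy (hq ▸ hM q hqM), hq⟩
  have himg : (M : Set (ZMod n))ᶜ = c '' (M : Set (ZMod n))ᶜ :=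
    Set.eq_of_subset_of_ncard_le hsub (Set.ncard_image_le (Set.toFinite _)) (Set.toFinite _)
  have hcompl : ∀ x, x ∉ M → c x ∉ M := by
    intro x hx
    have : c x ∈ (M : Set (ZMod n))ᶜ := by rw [himg]; exact ⟨x, hx, rfl⟩
    exact this
  -- `d = c 0` is the only state with several preimages, and it lies in `M`
  have hinj : ∀ x y, c x = c y → c x ∉ M → x = y := by
    intro x y hxy hx
    by_contra hne
    have h1 : 1 < {q : ZMod n | c q = c x}.ncard :=
      (Set.one_lt_ncard_iff (Set.toFinite _)).2 ⟨x, y, rfl, hxy.symm, hne⟩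
    exact hx ((hstd.2 _).1 h1 ▸ hM 0 M.zero_mem)
  have key : ∀ (w : List Letter) (x : ZMod n), ¬ (∀ q, q ∈ act c w '' Set.univ ↔ q + x ∉ M) := by
    intro w
    induction w using List.reverseRecOn with
    | nil =>
      intro x hx
      exact (hx (-x)).1 ⟨-x, trivial, rfl⟩ (by simp)
    | append_singleton w l ih =>
      intro x hx
      rw [act_append_image] at hx
      cases l with
      | a =>
        have hxM : x ∈ M := by
          by_contra hxM
          obtain ⟨q, _, hq⟩ := (hx 0).2 (by simpa using hxM)
          exact hstd.1 q hq
        apply ih 0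
        intro q
        rw [add_zero]
        constructor
        · intro hq hqM
          exact (hx (c q)).1 ⟨q, hq, rfl⟩ (M.add_mem (hM q hqM) hxM)
        · intro hq
          obtain ⟨q', hq', e⟩ := (hx (c q)).2
            (fun h => hcompl q hq ((M.add_mem_cancel_right hxM).1 h))
          have : q = q' := hinj q q' e.symm (hcompl q hq)
          exact this ▸ hq'
      | b =>
        apply ih (x + 1)
        intro q
        have e : q + 1 ∈ act c [Letter.b] '' (act c w '' Set.univ) ↔ q ∈ act c w '' Set.univ := by
          constructor
          · rintro ⟨y, hy, hyq⟩
            have : y = q := by simpa [act] using hyq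
            exact this ▸ hy
          · intro hq
            exact ⟨q, hq, rfl⟩
        rw [← e, hx, add_assoc, add_comm 1 x]
  obtain ⟨w, hw⟩ := hcr _ hne
  exact key w 0 (fun q => by rw [hw]; simp)

/-- The preimage of a set `T` without `0` under `c` is mapped onto `T`, and it is larger than `T` if
`c 0 ∈ T`. -/
lemma preimage_facts {n : ℕ} [NeZero n] {c : ZMod n → ZMod n} (hstd : Standardized c)
    (hcr : CompletelyReachable c) {T : Set (ZMod n)} (h0 : (0 : ZMod n) ∉ T) :
    c '' (c ⁻¹' T) = T ∧ T.ncard ≤ (c ⁻¹' T).ncard ∧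
      (c 0 ∈ T → T.ncard < (c ⁻¹' T).ncard) := by
  have himg : c '' (c ⁻¹' T) = T := by
    apply Set.image_preimage_eq_of_subset
    intro p hp
    exact exists_preimage hstd.1 hcr (fun h => h0 (h ▸ hp))
  have hle : T.ncard ≤ (c ⁻¹' T).ncard := by
    have := Set.ncard_image_le (f := c) (Set.toFinite (c ⁻¹' T))
    rwa [himg] at this
  refine ⟨himg, hle, fun hd => lt_of_le_of_ne hle fun heq => ?_⟩
  have hinj : Set.InjOn c (c ⁻¹' T) :=
    Set.injOn_of_ncard_image_eq (by rw [himg, heq]) (Set.toFinite _)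
  obtain ⟨x, y, hx, hy, hxy⟩ := (Set.one_lt_ncard_iff (Set.toFinite _)).1 ((hstd.2 (c 0)).2 rfl)
  have hx' : c x = c 0 := hx
  have hy' : c y = c 0 := hy
  exact hxy (hinj (by simpa [hx'] using hd) (by simpa [hy'] using hd) (hx'.trans hy'.symm))

/-- If `0 ∉ T`, an expansion of `c⁻¹ T` followed by `c` is an expansion of `T`. -/
lemma Expands.of_preimage {n : ℕ} [NeZero n] {δ : ZMod n → ZMod n} {k : ℕ}
    (hstd : Standardized (letterC δ k)) (hcr : CompletelyReachable (letterC δ k))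
    {T : Set (ZMod n)} (h0 : (0 : ZMod n) ∉ T) {L : ℕ}
    (h : Expands δ (letterC δ k ⁻¹' T) L) : Expands δ T (L + (k + 1)) := by
  obtain ⟨T', w, h1, h2, h3⟩ := h
  obtain ⟨himg, hle, -⟩ := preimage_facts hstd hcr h0
  refine ⟨T', w ++ (List.replicate k Letter.b ++ [Letter.a]), hle.trans_lt h1, ?_, ?_⟩
  · rw [act_append_image, h2, act_wordC, himg]
  · simpa using h3

lemma expands_of_map_zero_mem {n : ℕ} [NeZero n] {δ : ZMod n → ZMod n} {k : ℕ}
    (hstd : Standardized (letterC δ k)) (hcr : CompletelyReachable (letterC δ k))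
    {T : Set (ZMod n)} (h0 : (0 : ZMod n) ∉ T) (hd : letterC δ k 0 ∈ T) :
    Expands δ T (k + 1) := by
  obtain ⟨himg, -, hlt⟩ := preimage_facts hstd hcr h0
  exact ⟨_, List.replicate k Letter.b ++ [Letter.a], hlt hd, by rw [act_wordC, himg], by simp⟩

/-! ### The chain of subgroups -/

/-- `H₀ = 0`, and `H_{t+1}` is generated by `H_t ∪ c(H_t)`. -/
def chain {n : ℕ} (c : ZMod n → ZMod n) : ℕ → AddSubgroup (ZMod n)
  | 0 => ⊥
  | t + 1 => AddSubgroup.closure ((chain c t : Set (ZMod n)) ∪ c '' (chain c t))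

lemma chain_le_succ {n : ℕ} (c : ZMod n → ZMod n) (t : ℕ) : chain c t ≤ chain c (t + 1) :=
  fun _ hx => AddSubgroup.subset_closure (Or.inl hx)

lemma map_mem_chain_succ {n : ℕ} (c : ZMod n → ZMod n) (t : ℕ) {y : ZMod n}
    (hy : y ∈ chain c t) : c y ∈ chain c (t + 1) :=
  AddSubgroup.subset_closure (Or.inr ⟨y, hy, rfl⟩)

/-- The chain at least doubles in size at each step until it is everything. -/
lemma two_pow_le_card_chain {n : ℕ} [NeZero n] {c : ZMod n → ZMod n} (hstd : Standardized c)
    (hcr : CompletelyReachable c) (t : ℕ) :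
    chain c t = ⊤ ∨ 2 ^ t ≤ Nat.card (chain c t) := by
  induction t with
  | zero => right; exact Nat.card_pos
  | succ t ih =>
    by_cases heq : chain c t = chain c (t + 1)
    · left
      rw [← heq]
      exact eq_top_of_maps_to hstd hcr _ fun x hx => heq ▸ map_mem_chain_succ c t hx
    · rcases ih with ih | ih
      · exact absurd (le_antisymm (chain_le_succ c t) (ih ▸ le_top)) heq
      · right
        obtain ⟨m, hm⟩ := AddSubgroup.card_dvd_of_le (chain_le_succ c t)
        have hpos : 0 < Nat.card (chain c (t + 1)) := Nat.card_pos
        have hm2 : 2 ≤ m := by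
          by_contra! hlt
          interval_cases m
          · omega
          · exact heq (AddSubgroup.eq_of_le_of_card_ge (chain_le_succ c t) (by omega))
        rw [hm, pow_succ]
        exact Nat.mul_le_mul ih hm2

/-- A subgroup of `ZMod n` consists of the multiples of its index. -/
lemma intCast_mem_iff {n : ℕ} (H : AddSubgroup (ZMod n)) (z : ℤ) :
    (z : ZMod n) ∈ H ↔ (H.index : ℤ) ∣ z := by
  have hidx : (H.comap (Int.castAddHom (ZMod n))).index = H.index :=
    AddSubgroup.index_comap_of_surjective _ (ZMod.intCast_surjective)
  obtain ⟨g, hg⟩ := Int.subgroup_cyclic (H.comap (Int.castAddHom (ZMod n)))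
  have hg' : H.comap (Int.castAddHom (ZMod n)) = AddSubgroup.zmultiples g := by
    rw [hg, AddSubgroup.zmultiples_eq_closure]
  rw [hg', Int.index_zmultiples] at hidx
  have : z ∈ H.comap (Int.castAddHom (ZMod n)) ↔ g ∣ z := by
    rw [hg', Int.mem_zmultiples_iff]
  rw [← hidx, Int.natAbs_dvd, ← this]
  rfl

lemma natCast_mem_iff {n : ℕ} (H : AddSubgroup (ZMod n)) (z : ℕ) :
    (z : ZMod n) ∈ H ↔ H.index ∣ z := by
  have := intCast_mem_iff H z
  rwa [Int.cast_natCast, Int.natCast_dvd_natCast] at this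

/-- Each element of a subgroup `H'` containing `H` has a representative modulo `H` in
`[0, e - e']`, where `e` and `e'` are the indices: it is a multiple of `e'` smaller than `e`. -/
lemma exists_rep {n : ℕ} [NeZero n] {H H' : AddSubgroup (ZMod n)} (hle : H ≤ H') {x : ZMod n}
    (hx : x ∈ H') : ∃ m : ℕ, m + H'.index ≤ H.index ∧ x - m ∈ H := by
  have hpos : 0 < H.index := Nat.pos_of_ne_zero AddSubgroup.index_ne_zero_of_finite
  have hdvd : H'.index ∣ H.index := AddSubgroup.index_dvd_of_le hle
  have hxv : H'.index ∣ x.val := (natCast_mem_iff H' _).1 (by simpa using hx)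
  refine ⟨x.val % H.index, ?_, ?_⟩
  · have h1 : x.val % H.index < H.index := Nat.mod_lt _ hpos
    obtain ⟨u, hu⟩ := (Nat.dvd_mod_iff hdvd).2 hxv
    obtain ⟨v, hv⟩ := hdvd
    have huv : H'.index * u < H'.index * v := by rw [← hu, ← hv]; exact h1
    have : u + 1 ≤ v := lt_of_mul_lt_mul_left huv (Nat.zero_le _)
    rw [hu, hv, ← Nat.mul_succ]
    exact Nat.mul_le_mul_left _ this
  · have h2 : ((x.val : ℕ) : ZMod n) = ((H.index * (x.val / H.index) + x.val % H.index : ℕ) :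
        ZMod n) := by rw [Nat.div_add_mod]
    rw [ZMod.natCast_zmod_val] at h2
    nth_rewrite 1 [h2]
    rw [Nat.cast_add, add_sub_cancel_right, natCast_mem_iff]
    exact dvd_mul_right _ _

/-! ### Expanding a set -/

/-- `T` meets `H` without containing it. -/
def Splits {n : ℕ} (H : AddSubgroup (ZMod n)) (T : Set (ZMod n)) : Prop :=
  (∃ y ∈ H, y ∉ T) ∧ ∃ z ∈ H, z ∈ T

/-- Whether `T - x` splits `H` depends on the coset `x + H` only. -/
lemma Splits.shift_congr {n : ℕ} {H : AddSubgroup (ZMod n)} {T : Set (ZMod n)} {x y : ZMod n}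
    (h : Splits H (shift x T)) (hxy : x - y ∈ H) : Splits H (shift y T) := by
  obtain ⟨⟨p, hp, hpT⟩, ⟨q, hq, hqT⟩⟩ := h
  refine ⟨⟨p + (x - y), H.add_mem hp hxy, ?_⟩, ⟨q + (x - y), H.add_mem hq hxy, ?_⟩⟩
  · simpa [shift, add_assoc] using hpT
  · simpa [shift, add_assoc] using hqT

/-- A set splitting a subgroup generated by `H ∪ c(H)` is separated either inside a coset of `H`
or by a translation by some `c y` with `y ∈ H`. -/
lemma Splits.exists_step {n : ℕ} [NeZero n] {c : ZMod n → ZMod n} {t : ℕ} {T : Set (ZMod n)}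
    (h : Splits (chain c (t + 1)) T) :
    ∃ x ∈ chain c (t + 1), Splits (chain c t) (shift x T) ∨
      (x ∉ T ∧ ∃ y ∈ chain c t, x + c y ∈ T) := by
  by_contra! hno
  obtain ⟨⟨p, hp, hpT⟩, ⟨q, hq, hqT⟩⟩ := h
  have key : ∀ g ∈ chain c (t + 1), g ∈ chain c (t + 1) ∧
      ∀ x ∈ chain c (t + 1), x ∉ T → x + g ∉ T := by
    intro g hg
    refine AddSubgroup.closure_induction (p := fun g _ => g ∈ chain c (t + 1) ∧
      ∀ x ∈ chain c (t + 1), x ∉ T → x + g ∉ T) ?_ ?_ ?_ ?_ hg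
    · rintro g (hg | ⟨y, hy, rfl⟩)
      · refine ⟨chain_le_succ c t hg, fun x hx hxT hxg => (hno x hx).1 ⟨?_, ?_⟩⟩
        · exact ⟨0, zero_mem _, by simpa [shift] using hxT⟩
        · exact ⟨g, hg, by simpa [shift, add_comm] using hxg⟩
      · exact ⟨map_mem_chain_succ c t hy, fun x hx hxT => (hno x hx).2 hxT y hy⟩
    · exact ⟨zero_mem _, fun x _ hx => by simpa using hx⟩
    · rintro g g' _ _ ⟨h1, h2⟩ ⟨h3, h4⟩
      refine ⟨add_mem h1 h3, fun x hx hxT => ?_⟩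
      rw [← add_assoc]
      exact h4 _ (add_mem hx h1) (h2 x hx hxT)
    · rintro g _ ⟨h1, h2⟩
      have hmul : ∀ m : ℕ, ∀ x ∈ chain c (t + 1), x ∉ T → x + m • g ∉ T := by
        intro m
        induction m with
        | zero => intro x _ hx; simpa using hx
        | succ m ih =>
          intro x hx hxT
          rw [succ_nsmul, ← add_assoc]
          exact h2 _ (add_mem hx (nsmul_mem h1 m)) (ih x hx hxT)
      -- the group is finite, so `-g = (n - 1) • g`
      have hneg : -g = (n - 1) • g := by
        rw [neg_eq_iff_add_eq_zero, ← succ_nsmul', Nat.sub_add_cancel (NeZero.one_le)]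
        simp
      exact ⟨neg_mem h1, hneg ▸ hmul (n - 1)⟩
  exact (key (q - p) (sub_mem hq hp)).2 p hp hpT (by simpa using hqT)

/-- A set splitting `H_t` is expanded with at most `t` letters `c` and `n - e_t` rotations, where
`e_t` is the index of `H_t`. -/
lemma expands_of_split {n : ℕ} [NeZero n] {δ : ZMod n → ZMod n} {k : ℕ}
    (hstd : Standardized (letterC δ k)) (hcr : CompletelyReachable (letterC δ k)) (t : ℕ)
    (T : Set (ZMod n)) (h : Splits (chain (letterC δ k) t) T) :
    Expands δ T (n - (chain (letterC δ k) t).index + t * (k + 1)) := by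
  set c := letterC δ k with hc
  induction t generalizing T with
  | zero =>
    obtain ⟨⟨p, hp, hpT⟩, ⟨q, hq, hqT⟩⟩ := h
    simp only [chain, AddSubgroup.mem_bot] at hp hq
    subst hp hq
    exact absurd hqT hpT
  | succ t ih =>
    have hidx : (chain c t).index ≤ n := by
      have h1 := (chain c t).index_dvd_card
      rw [Nat.card_zmod] at h1
      exact Nat.le_of_dvd (NeZero.pos n) h1
    by_cases hsx : ∃ x ∈ chain c (t + 1), Splits (chain c t) (shift x T)
    · obtain ⟨x, hx, hsx⟩ := hsx
      obtain ⟨m, hm, hxm⟩ := exists_rep (chain_le_succ c t) hx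
      refine ((ih _ (hsx.shift_congr hxm)).of_shift m).mono ?_
      rw [Nat.succ_mul]
      omega
    · obtain ⟨x, hx, hsplit⟩ := h.exists_step
      obtain ⟨hxT, y, hy, hyT⟩ := hsplit.resolve_left fun h' => hsx ⟨x, hx, h'⟩
      obtain ⟨m, hm, hxm⟩ := exists_rep (chain_le_succ c t) hx
      have hmem : (m : ZMod n) ∈ chain c (t + 1) := by
        simpa using sub_mem hx (chain_le_succ c t hxm)
      -- inside `H_{t+1}` the set `T` is a union of cosets of `H_t`, so `m` can replace `x`
      have h0 : (0 : ZMod n) ∉ shift (m : ZMod n) T := fun h0 =>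
        hsx ⟨m, hmem, ⟨x - m, hxm, by simpa [shift] using hxT⟩, ⟨0, zero_mem _, h0⟩⟩
      have hcy : c y ∈ shift (m : ZMod n) T := by
        by_contra hcy
        refine hsx ⟨c y + m, add_mem (map_mem_chain_succ c t hy) hmem,
          ⟨0, zero_mem _, by simpa [shift] using hcy⟩, ⟨x - m, hxm, ?_⟩⟩
        have : x - m + (c y + m) = x + c y := by ring
        simpa [shift, this] using hyT
      by_cases hd : c 0 ∈ shift (m : ZMod n) T
      · refine ((expands_of_map_zero_mem hstd hcr h0 hd).of_shift m).mono ?_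
        rw [Nat.succ_mul]
        omega
      · refine (((ih (c ⁻¹' shift (m : ZMod n) T)
          ⟨⟨0, zero_mem _, hd⟩, ⟨y, hy, hcy⟩⟩).of_preimage hstd hcr h0).of_shift m).mono ?_
        rw [Nat.succ_mul]
        omega

/-- Every proper nonempty set is expanded with at most `n - 1` rotations and `t` letters `c`, for
some `t` such that `|H_j|` divides the size of the set for all `j < t`. -/
lemma exists_expands {n : ℕ} [NeZero n] {δ : ZMod n → ZMod n} {k : ℕ}
    (hstd : Standardized (letterC δ k)) (hcr : CompletelyReachable (letterC δ k))
    (T : Set (ZMod n)) (hne : T.Nonempty) (hprop : T ≠ Set.univ) :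
    ∃ t : ℕ, t < n ∧ (∀ j ≤ t, Nat.card (chain (letterC δ k) j) ∣ T.ncard) ∧
      Expands δ T (n - 1 + (t + 1) * (k + 1)) := by
  classical
  set c := letterC δ k with hc
  have hsplit_n : ∃ x, Splits (chain c n) (shift x T) := by
    have htop : chain c n = ⊤ := by
      refine (two_pow_le_card_chain hstd hcr n).resolve_right fun h => ?_
      have h1 := Nat.card_le_card_of_injective _ (Subtype.val_injective (p := (· ∈ chain c n)))
      rw [Nat.card_zmod] at h1
      exact absurd (h.trans h1) (not_le.2 Nat.lt_two_pow_self)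
    obtain ⟨z, hz⟩ := hne
    obtain ⟨y, hy⟩ := (Set.ne_univ_iff_exists_notMem T).1 hprop
    rw [htop]
    exact ⟨0, ⟨y, trivial, by simpa [shift]⟩, ⟨z, trivial, by simpa [shift]⟩⟩
  have hex : ∃ t, ∃ x, Splits (chain c t) (shift x T) := ⟨n, hsplit_n⟩
  have hmin : ∀ j < Nat.find hex, ∀ x ∈ T, ∀ g ∈ chain c j, x + g ∈ T := by
    intro j hj x hx g hg
    by_contra hxg
    refine Nat.find_min hex hj ⟨x, ⟨g, hg, ?_⟩, ⟨0, zero_mem _, ?_⟩⟩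
    · simpa [shift, add_comm] using hxg
    · simpa [shift] using hx
  obtain ⟨x, hx⟩ := Nat.find_spec hex
  have hdvd : ∀ j < Nat.find hex, Nat.card (chain c j) ∣ T.ncard := by
    intro j hj
    have hpre : (QuotientAddGroup.mk : ZMod n → ZMod n ⧸ chain c j) ⁻¹'
        (QuotientAddGroup.mk '' T) = T := by
      ext q
      constructor
      · rintro ⟨p, hp, hpq⟩
        have := hmin j hj p hp _ (QuotientAddGroup.eq.1 hpq)
        simpa using this
      · intro hq
        exact ⟨q, hq, rfl⟩
    rw [← Nat.card_coe_set_eq, ← hpre,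
      Nat.card_congr (QuotientAddGroup.preimageMkEquivAddSubgroupProdSet _ _), Nat.card_prod]
    exact dvd_mul_right _ _
  have hpos : 0 < Nat.find hex := by
    rw [Nat.pos_iff_ne_zero]
    intro h0
    rw [h0] at hx
    obtain ⟨⟨p, hp, hpT⟩, ⟨q, hq, hqT⟩⟩ := hx
    simp only [chain, AddSubgroup.mem_bot] at hp hq
    subst hp hq
    exact hpT hqT
  have hle : Nat.find hex ≤ n := Nat.find_min' hex hsplit_n
  obtain ⟨t, ht⟩ : ∃ t, Nat.find hex = t + 1 := ⟨Nat.find hex - 1, by omega⟩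
  refine ⟨t, by omega, fun j hj => hdvd j (by omega), ?_⟩
  rw [ht] at hx
  obtain ⟨m, hm, hxm⟩ := exists_rep (le_top : chain c (t + 1) ≤ ⊤) (AddSubgroup.mem_top x)
  rw [AddSubgroup.index_top] at hm
  have hidx : (chain c (t + 1)).index ≤ n := by
    have h1 := (chain c (t + 1)).index_dvd_card
    rw [Nat.card_zmod] at h1
    exact Nat.le_of_dvd (NeZero.pos n) h1
  refine ((expands_of_split hstd hcr (t + 1) _ (hx.shift_congr hxm)).of_shift m).mono ?_
  rw [← hc]
  omega

/-! ### Counting -/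

/-- The number of indices `j ≥ 1` for which `|H_j|` divides `m`. -/
noncomputable def extra {n : ℕ} (c : ZMod n → ZMod n) (m : ℕ) : ℕ :=
  ((Finset.Icc 1 n).filter fun j => Nat.card (chain c j) ∣ m).card

/-- Double counting: fewer than `n / |H_j|` positive integers below `n` are multiples of `|H_j|`, and
`|H_j| ≥ 2^j` unless `H_j` is everything, in which case there are none. -/
lemma sum_extra_le {n : ℕ} [NeZero n] {c : ZMod n → ZMod n} (hstd : Standardized c)
    (hcr : CompletelyReachable c) : ∑ m ∈ Finset.Ioc 0 (n - 1), extra c m ≤ n - 1 := by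
  have hn : 0 < n := NeZero.pos n
  have h1 : ∑ m ∈ Finset.Ioc 0 (n - 1), extra c m =
      ∑ j ∈ Finset.Ico 1 (n + 1), (n - 1) / Nat.card (chain c j) := by
    simp only [extra, Finset.card_filter]
    rw [Finset.sum_comm]
    refine Finset.sum_congr rfl fun j _ => ?_
    rw [← Finset.card_filter, Nat.Ioc_filter_dvd_card_eq_div]
  rw [h1]
  calc ∑ j ∈ Finset.Ico 1 (n + 1), (n - 1) / Nat.card (chain c j)
      ≤ ∑ j ∈ Finset.Ico 1 (n + 1), (n - 1) / 2 ^ j := by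
        refine Finset.sum_le_sum fun j _ => ?_
        rcases two_pow_le_card_chain hstd hcr j with h | h
        · rw [h, AddSubgroup.card_top, Nat.card_zmod, Nat.div_eq_of_lt (by omega)]
          exact Nat.zero_le _
        · exact Nat.div_le_div_left h (by positivity)
    _ ≤ (n - 1) / (2 - 1) := Nat.geom_sum_Ico_le le_rfl _ _
    _ = n - 1 := by simp

/-- Repeated expansion up to the whole state set. Expansions that skip sizes only drop terms of the
sum. -/
lemma exists_reaching {n : ℕ} [NeZero n] {δ : ZMod n → ZMod n} {k : ℕ}
    (hstd : Standardized (letterC δ k)) (hcr : CompletelyReachable (letterC δ k))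
    (r : ℕ) (S : Set (ZMod n)) (hne : S.Nonempty) (hr : n ≤ S.ncard + r) :
    ∃ w : List Letter, act δ w '' Set.univ = S ∧
      w.length ≤ ∑ m ∈ Finset.Ico S.ncard n,
        (n - 1 + (extra (letterC δ k) m + 1) * (k + 1)) := by
  induction r generalizing S with
  | zero =>
    have : S = Set.univ := by
      apply Set.eq_of_subset_of_ncard_le (Set.subset_univ _) _ (Set.toFinite _)
      rw [Set.ncard_univ, Nat.card_zmod]
      exact hr
    subst this
    exact ⟨[], by ext; simp [act], by simp⟩
  | succ r ih =>
    by_cases hprop : S = Set.univ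
    · subst hprop
      exact ⟨[], by ext; simp [act], by simp⟩
    · obtain ⟨t, htn, hdvd, T, u, hlt, himg, hlen⟩ := exists_expands hstd hcr S hne hprop
      have hTn : T.ncard ≤ n := by
        have := Set.ncard_le_ncard (Set.subset_univ T) (Set.toFinite _)
        rwa [Set.ncard_univ, Nat.card_zmod] at this
      obtain ⟨w, hw, hwl⟩ := ih T ((Set.ncard_pos (Set.toFinite _)).1 (by omega)) (by omega)
      refine ⟨w ++ u, by rw [act_append_image, hw, himg], ?_⟩
      have ht : t ≤ extra (letterC δ k) S.ncard := by
        have : Finset.Icc 1 t ⊆ (Finset.Icc 1 n).filter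
            fun j => Nat.card (chain (letterC δ k) j) ∣ S.ncard := by
          intro j hj
          rw [Finset.mem_Icc] at hj
          rw [Finset.mem_filter, Finset.mem_Icc]
          exact ⟨⟨hj.1, by omega⟩, hdvd j hj.2⟩
        simpa [extra] using Finset.card_le_card this
      rw [Finset.sum_eq_sum_Ico_succ_bot (by omega), List.length_append, add_comm]
      refine Nat.add_le_add (hlen.trans ?_) (hwl.trans ?_)
      · gcongr
      · exact Finset.sum_le_sum_of_subset (Finset.Ico_subset_Ico (by omega) le_rfl)

end Stmt19

/-- If `𝒜` is a binary completely reachable circular DFA on `ZMod n` and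
`k ≥ 1` is such that `𝒜^k` (with `δ_{a_k}(q) = δ_a(q + k)`) is standardized and
completely reachable, then every nonempty proper subset `S` with `|S| = s` has a
reaching word in `𝒜` of length at most `(n − s)·n + n − 1 + k·(2n − s − 1)`. -/
theorem stmt19 {n : ℕ} [NeZero n] (δa : ZMod n → ZMod n)
    (k : ℕ) (hk : 1 ≤ k)
    (hcr : CompletelyReachable δa)
    (hstd : Standardized (fun q => δa (q + (k : ZMod n))))
    (hcrk : CompletelyReachable (fun q => δa (q + (k : ZMod n))))
    (S : Set (ZMod n)) (hne : S.Nonempty) (hprop : S ≠ Set.univ) :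
    ∃ w : List Letter, act δa w '' Set.univ = S ∧
      w.length ≤ (n - S.ncard) * n + n - 1 + k * (2 * n - S.ncard - 1) := by
  have hs : 0 < S.ncard := (Set.ncard_pos (Set.toFinite _)).2 hne
  have hn : 0 < n := NeZero.pos n
  have hsn : S.ncard ≤ n := by
    have := Set.ncard_le_ncard (Set.subset_univ S) (Set.toFinite _)
    rwa [Set.ncard_univ, Nat.card_zmod] at this
  obtain ⟨w, hw, hlen⟩ := Stmt19.exists_reaching (δ := δa) (k := k) hstd hcrk n S hne (by omega)
  refine ⟨w, hw, hlen.trans ?_⟩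
  have hsum : ∑ m ∈ Finset.Ico S.ncard n, Stmt19.extra (Stmt19.letterC δa k) m ≤ n - 1 := by
    refine le_trans (Finset.sum_le_sum_of_subset fun m hm => ?_) (Stmt19.sum_extra_le hstd hcrk)
    rw [Finset.mem_Ico] at hm
    rw [Finset.mem_Ioc]
    omega
  rw [Finset.sum_add_distrib, ← Finset.sum_mul, Finset.sum_add_distrib]
  simp only [Finset.sum_const, Nat.card_Ico, smul_eq_mul, mul_one]
  generalize ∑ m ∈ Finset.Ico S.ncard n, Stmt19.extra (Stmt19.letterC δa k) m = E at *
  obtain ⟨r, hr⟩ : ∃ r, n = S.ncard + r := ⟨n - S.ncard, by omega⟩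
  obtain ⟨p, rfl⟩ : ∃ p, n = p + 1 := ⟨n - 1, by omega⟩
  have e1 : p + 1 - S.ncard = r := by omega
  have e2 : 2 * (p + 1) - S.ncard - 1 = r + p := by omega
  rw [e1, e2]
  simp only [Nat.add_sub_cancel] at *
  have e3 : r * (p + 1) + (p + 1) - 1 = r * (p + 1) + p := by omega
  rw [e3]
  nlinarith [Nat.mul_le_mul_right (k + 1) hsum]
end
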